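/- Let O be an order in an imaginary quadratic field and let N be a positive integer. The following are equivalent: (i) there is an ideal I of O such that the additive group of O/I is isomorphic to ℤ/Nℤ; (ii) there is an O-submodule of O/NO whose underlying additive group is isomorphic to ℤ/Nℤ; (iii) H(O,N) holds. -/

import Mathlib

set_option synthInstance.maxHeartbeats 1000000
set_option maxHeartbeats 1000000

open NumberField

/-- `K` is an imaginary quadratic field: a number field of degree `2` over `ℚ`
with no real embedding. -/
def IsImagQuadratic (K : Type*) [Field K] [NumberField K] : Prop :=
  Module.finrank ℚ K = 2 ∧ IsEmpty (K →+* ℝ)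

/-- `O = ℤ + f·𝓞_K` is the order of conductor `f` in the number field `K`,
viewed as a subalgebra of `K`. -/
def IsOrderOfConductor (K : Type*) [Field K] [NumberField K] (f : ℕ)
    (O : Subalgebra ℤ K) : Prop :=
  ∀ x : K, x ∈ O ↔ ∃ (a : ℤ) (y : 𝓞 K), x = (a : K) + (f : K) * (algebraMap (𝓞 K) K y)

/-- The prime `ℓ` is *split* in the ring `R`: `R/ℓR ≅ ℤ/ℓ × ℤ/ℓ` as rings. -/
def SplitsIn (R : Type*) [CommRing R] (ℓ : ℕ) : Prop :=
  Nonempty ((R ⧸ Ideal.span {(ℓ : R)}) ≃+* ZMod ℓ × ZMod ℓ)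

/-- The prime `ℓ` is *inert* in the ring `R`: `R/ℓR` is a field. -/
def InertIn (R : Type*) [CommRing R] (ℓ : ℕ) : Prop :=
  IsField (R ⧸ Ideal.span {(ℓ : R)})

/-- The condition `H(O,N)`: there is an element `P` of additive order `N` in `O/NO`
whose orbit under the Cartan group `C_N(O) = (O/NO)ˣ` has cardinality `φ(N)`. -/
def CartanH (R : Type*) [CommRing R] (N : ℕ) : Prop :=
  ∃ P : R ⧸ Ideal.span {(N : R)}, addOrderOf P = N ∧
    Nat.card ↥(MulAction.orbit (R ⧸ Ideal.span {(N : R)})ˣ P) = Nat.totient N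

open Polynomial

/-!
All three conditions are equivalent to the existence of a ring homomorphism `O → ℤ/N`. If `O` acts
on a cyclic group of order `N`, then each of its elements acts on a generator as an integer, which
gives such a homomorphism; conversely, write `O = ℤ[τ]` with `τ` a root of a monic quadratic `f`.
A homomorphism `O → ℤ/N` is a root `c` of `f` modulo `N`, and the cofactor of `X - c` in `f`,
evaluated at `τ`, has order `N` in `O/NO` and is multiplied by `c` under `τ`.

For `P` of order `N`, the orbit of `P` contains the `φ(N)` generators of `ℤP`, so `H(O,N)` says that
the units of `O/NO` preserve `ℤP`. If some `f(a)` is prime to `N`, then `a - τ` is a unit, hence `τ`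
preserves `ℤP`. Otherwise, since `f` cannot vanish identically modulo an odd prime, `N` is even and
`f` has only even values. Then `a - 2τ` is a unit for some `a`, which suffices for the odd part
of `N`, while Hensel's lemma gives a root of `f` modulo every power of `2`.
-/

section QuadraticPowerBasis

variable (A R : Type*) [CommRing A] [CommRing R] [Algebra A R]

theorem exists_dual_apply_one_eq_one [Module.Free A R] [Module.Finite A R] [FaithfulSMul A R] :
    ∃ l : Module.Dual A R, l 1 = 1 := by
  let J : Ideal A := LinearMap.range (Module.Dual.eval A R 1)
  have one_mem : (1 : R) ∈ J.map (algebraMap A R) := by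
    let b := Module.Free.chooseBasis A R
    rw [← b.sum_repr 1]
    refine Ideal.sum_mem _ fun i _ => ?_
    rw [Algebra.smul_def]
    exact Ideal.mul_mem_right _ _ (Ideal.mem_map_of_mem _ ⟨b.coord i, rfl⟩)
  have J_eq_top : J = ⊤ :=
    (Ideal.map_eq_top_iff _ (FaithfulSMul.algebraMap_injective A R)
      (algebraMap_isIntegral_iff.2 inferInstance)).1 ((Ideal.eq_top_iff_one _).2 one_mem)
  exact (Ideal.eq_top_iff_one J).1 J_eq_top

theorem exists_powerBasis_dim_eq_two [IsDomain A] [IsPrincipalIdealRing A]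
    [Algebra.IsQuadraticExtension A R] : ∃ pb : PowerBasis A R, pb.dim = 2 := by
  have : Nontrivial R := Module.nontrivial_of_finrank_pos (R := A)
    (by rw [Algebra.IsQuadraticExtension.finrank_eq_two]; exact two_pos)
  obtain ⟨l, hl⟩ := exists_dual_apply_one_eq_one A R
  have l_surjective : Function.Surjective l := fun a => ⟨a • 1, by simp [hl]⟩
  have finrank_ker : Module.finrank A (LinearMap.ker l) = 1 := by
    have h := Submodule.finrank_quotient_add_finrank (LinearMap.ker l)
    rw [(l.quotKerEquivOfSurjective l_surjective).finrank_eq, Module.finrank_self,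
      Algebra.IsQuadraticExtension.finrank_eq_two] at h
    lia
  let b : Module.Basis (Fin 2) A R := Module.Basis.mkFinCons 1
    (Module.finBasisOfFinrankEq A (LinearMap.ker l) finrank_ker)
    (fun c x hx h => by simpa [hl, LinearMap.mem_ker.1 hx] using congrArg l h)
    (fun z => ⟨-l z, by simp [hl]⟩)
  refine ⟨⟨b 1, 2, b, fun i => ?_⟩, rfl⟩
  fin_cases i <;> simp [b]

end QuadraticPowerBasis

section OrderOfConductor

variable {K : Type*} [Field K] [NumberField K] {f : ℕ} {O : Subalgebra ℤ K}

theorem IsOrderOfConductor.le_integralClosure (hO : IsOrderOfConductor K f O) :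
    O ≤ integralClosure ℤ K := fun x hx => by
  obtain ⟨a, y, rfl⟩ := (hO x).1 hx
  exact isIntegral_algebraMap.add ((isIntegral_natCast f).mul y.isIntegral_coe)

theorem IsOrderOfConductor.finite (hO : IsOrderOfConductor K f O) : Module.Finite ℤ O :=
  have : Module.Finite ℤ (integralClosure ℤ K) := inferInstanceAs (Module.Finite ℤ (𝓞 K))
  Module.Finite.of_injective (Subalgebra.inclusion hO.le_integralClosure).toLinearMap
    (Subalgebra.inclusion_injective hO.le_integralClosure)

theorem IsOrderOfConductor.finrank_eq (hO : IsOrderOfConductor K f O) (hf : 0 < f) :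
    Module.finrank ℤ O = Module.finrank ℚ K := by
  have := hO.finite
  have : Module.Finite ℤ (integralClosure ℤ K) := inferInstanceAs (Module.Finite ℤ (𝓞 K))
  rw [← RingOfIntegers.rank K]
  refine le_antisymm (Submodule.finrank_mono (s := Subalgebra.toSubmodule O)
    (t := Subalgebra.toSubmodule (integralClosure ℤ K)) hO.le_integralClosure) ?_
  let mulConductor : 𝓞 K →ₗ[ℤ] O :=
    (f • (Algebra.linearMap (𝓞 K) K).restrictScalars ℤ).codRestrict (Subalgebra.toSubmodule O)
      fun y => (hO _).2 ⟨0, y, by simp⟩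
  refine LinearMap.finrank_le_finrank_of_injective (f := mulConductor) fun x y hxy => ?_
  have smul_eq : f • (x : K) = f • (y : K) := congrArg Subtype.val hxy
  exact RingOfIntegers.coe_injective (smul_right_injective K hf.ne' smul_eq)

theorem IsOrderOfConductor.isQuadraticExtension (hO : IsOrderOfConductor K f O) (hf : 0 < f)
    (hK : Module.finrank ℚ K = 2) : Algebra.IsQuadraticExtension ℤ O :=
  have := hO.finite
  { finrank_eq_two' := (hO.finrank_eq hf).trans hK }

end OrderOfConductor

section ScalarSubalgebra

variable (R : Type*) {M : Type*} [CommRing R] [AddCommGroup M] [Module R M]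

/-- The subring of those `r : R` acting on `P` as an integer, so that `scalarSubalgebra R P = ⊤`
says that the cyclic group generated by `P` is an `R`-submodule. -/
def scalarSubalgebra (P : M) : Subalgebra ℤ R where
  carrier := {r | r • P ∈ AddSubgroup.zmultiples P}
  add_mem' hr hs := by simpa only [Set.mem_ofPred_eq, add_smul] using add_mem hr hs
  mul_mem' := by
    rintro r s hr ⟨k, hk⟩
    simp only [Set.mem_ofPred_eq, mul_smul, ← hk, smul_comm r k P]
    exact zsmul_mem hr k
  algebraMap_mem' k := ⟨k, (Int.cast_smul_eq_zsmul R k P).symm⟩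

variable {R} {P : M}

theorem mem_scalarSubalgebra {r : R} :
    r ∈ scalarSubalgebra R P ↔ r • P ∈ AddSubgroup.zmultiples P := Iff.rfl

theorem scalarSubalgebra_le_nsmul (k : ℕ) :
    scalarSubalgebra R P ≤ scalarSubalgebra R (k • P) := by
  rintro r ⟨c, hc⟩
  exact ⟨c, by simp only [smul_comm r k P, ← hc, smul_comm k c P]⟩

theorem mem_scalarSubalgebra_of_mul_mem {q : ℕ} {r : R} (hq : q.Coprime (addOrderOf P))
    (hr : (q : R) * r ∈ scalarSubalgebra R P) : r ∈ scalarSubalgebra R P := by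
  obtain ⟨u, v, huv⟩ := Nat.isCoprime_iff_coprime.2 hq
  have r_smul : r • P = u • ((q : R) * r) • P := by
    calc r • P = (u * q + v * addOrderOf P : ℤ) • r • P := by rw [huv, one_smul]
      _ = u • ((q : R) * r) • P + v • r • addOrderOf P • P := by
        rw [add_smul, mul_smul, mul_smul, mul_smul, natCast_zsmul, natCast_zsmul,
          Nat.cast_smul_eq_nsmul, smul_comm r (addOrderOf P) P]
      _ = u • ((q : R) * r) • P := by rw [addOrderOf_nsmul_eq_zero, smul_zero, smul_zero, add_zero]
  rw [mem_scalarSubalgebra, r_smul]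
  exact zsmul_mem (mem_scalarSubalgebra.1 hr) u

theorem nonempty_ringHom_of_scalarSubalgebra_eq_top (h : scalarSubalgebra R P = ⊤) :
    Nonempty (R →+* ZMod (addOrderOf P)) := by
  have exists_eigenvalue (r : R) : ∃ k : ℤ, k • P = r • P :=
    mem_scalarSubalgebra.1 (h ▸ Algebra.mem_top)
  choose k hk using exists_eigenvalue
  have cast_eq {a b : ℤ} (hab : a • P = b • P) : (a : ZMod (addOrderOf P)) = b :=
    (ZMod.intCast_eq_intCast_iff _ _ _).2 (zsmul_eq_zsmul_iff_modEq.1 hab)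
  refine ⟨RingHom.mk' ⟨⟨fun r => (k r : ZMod (addOrderOf P)), ?_⟩, fun r s => ?_⟩ fun r s => ?_⟩
  · simpa using cast_eq (b := 1) (by rw [hk, one_smul, one_smul])
  · have mul_smul_eq : k (r * s) • P = (k r * k s) • P := by
      calc k (r * s) • P = r • k s • P := by rw [hk, hk, mul_smul]
        _ = k s • k r • P := by rw [hk r, smul_comm]
        _ = (k r * k s) • P := by rw [mul_comm, mul_smul]
    simpa using cast_eq mul_smul_eq
  · simpa using cast_eq (b := k r + k s) (by simp only [add_smul, hk])

theorem nonempty_span_addEquiv_zmod (h : scalarSubalgebra R P = ⊤) :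
    Nonempty (Submodule.span R {P} ≃+ ZMod (addOrderOf P)) := by
  have span_eq : (Submodule.span R {P}).toAddSubgroup = AddSubgroup.zmultiples P := by
    refine le_antisymm (fun x hx => ?_) (by simp [Submodule.mem_span_singleton_self])
    obtain ⟨r, rfl⟩ := Submodule.mem_span_singleton.1 hx
    exact mem_scalarSubalgebra.1 (h ▸ Algebra.mem_top)
  exact ⟨(AddEquiv.addSubgroupCongr span_eq).trans <|
    (zmodAddCyclicAddEquiv inferInstance).symm.trans
      (ZMod.ringEquivCongr (Nat.card_zmultiples P)).toAddEquiv⟩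

theorem nonempty_ringHom_of_addEquiv {N : ℕ} (e : M ≃+ ZMod N) : Nonempty (R →+* ZMod N) := by
  have addOrderOf_generator : addOrderOf (e.symm 1) = N := by
    rw [e.symm.addOrderOf_eq, ZMod.addOrderOf_one]
  have scalar_eq_top : scalarSubalgebra R (e.symm 1) = ⊤ := eq_top_iff.2 fun r _ => by
    obtain ⟨k, hk⟩ := ZMod.intCast_surjective (e (r • e.symm 1))
    exact ⟨k, e.injective (by simp [hk])⟩
  exact addOrderOf_generator ▸ nonempty_ringHom_of_scalarSubalgebra_eq_top scalar_eq_top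

end ScalarSubalgebra

section Orbit

variable {S M : Type*} [CommRing S] [AddCommGroup M] [Module S M] {P : M}

theorem ncard_zmultiples_addOrderOf_eq (hP : addOrderOf P ≠ 0) :
    {Q ∈ (AddSubgroup.zmultiples P : Set M) | addOrderOf Q = addOrderOf P}.ncard =
      (addOrderOf P).totient := by
  have : Finite (AddSubgroup.zmultiples P) := Nat.finite_of_card_ne_zero (by simpa using hP)
  have := Fintype.ofFinite (AddSubgroup.zmultiples P)
  rw [← IsAddCyclic.card_addOrderOf_eq_totient (α := AddSubgroup.zmultiples P)
    (by rw [← Nat.card_eq_fintype_card, Nat.card_zmultiples]), ← Set.ncard_coe_finset,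
    ← Set.ncard_image_of_injective _ Subtype.val_injective]
  congr 1
  ext Q
  simp only [Set.mem_ofPred_eq, Finset.coe_filter, Finset.mem_univ, true_and, Set.mem_image,
    Subtype.exists, AddSubgroup.addOrderOf_mk, SetLike.mem_coe]
  exact ⟨fun h => ⟨Q, h.1, h.2, rfl⟩, fun ⟨_, hmem, horder, h⟩ => h ▸ ⟨hmem, horder⟩⟩

theorem mem_orbit_units_of_mem_zmultiples {Q : M} (hS : (addOrderOf P : S) = 0)
    (hP : addOrderOf P ≠ 0) (hQ : Q ∈ AddSubgroup.zmultiples P)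
    (hQP : addOrderOf Q = addOrderOf P) : Q ∈ MulAction.orbit Sˣ P := by
  have : Finite (AddSubgroup.zmultiples P) := Nat.finite_of_card_ne_zero (by simpa using hP)
  have zmultiples_eq : AddSubgroup.zmultiples Q = AddSubgroup.zmultiples P :=
    AddSubgroup.eq_of_le_of_card_ge (by simpa using hQ) (by simp [hQP])
  obtain ⟨k, rfl⟩ := hQ
  obtain ⟨l, hl : l • k • P = P⟩ := zmultiples_eq ▸ AddSubgroup.mem_zmultiples P
  have addOrderOf_dvd : (addOrderOf P : ℤ) ∣ k * l - 1 := by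
    rw [addOrderOf_dvd_iff_zsmul_eq_zero, sub_smul, mul_comm, mul_smul, hl, one_smul, sub_self]
  have k_mul_l : (k : S) * l = 1 := by
    obtain ⟨c, hc⟩ := addOrderOf_dvd
    have := congrArg (Int.cast : ℤ → S) hc
    push_cast [hS] at this
    linear_combination this
  exact ⟨Units.mkOfMulEqOne _ _ k_mul_l, by simp [Units.smul_def, Int.cast_smul_eq_zsmul]⟩

theorem natCard_orbit_units_eq_totient_iff {N : ℕ} (hN : N ≠ 0) (hS : (N : S) = 0)
    (hP : addOrderOf P = N) :
    Nat.card (MulAction.orbit Sˣ P) = N.totient ↔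
      ∀ u : Sˣ, u • P ∈ AddSubgroup.zmultiples P := by
  subst hP
  have generators_subset : {Q ∈ (AddSubgroup.zmultiples P : Set M) | addOrderOf Q = addOrderOf P} ⊆
      MulAction.orbit Sˣ P := fun Q hQ => mem_orbit_units_of_mem_zmultiples hS hN hQ.1 hQ.2
  rw [← ncard_zmultiples_addOrderOf_eq hN, Nat.card_coe_set_eq]
  refine ⟨fun h u => ?_, fun h => congrArg Set.ncard (Set.Subset.antisymm ?_ generators_subset)⟩
  · have orbit_finite : (MulAction.orbit Sˣ P).Finite := Set.finite_of_ncard_ne_zero <| by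
      rw [h, ncard_zmultiples_addOrderOf_eq hN]
      exact (Nat.totient_pos.2 hN.bot_lt).ne'
    exact ((Set.eq_of_subset_of_ncard_le generators_subset h.le orbit_finite).ge
      (MulAction.mem_orbit P u)).1
  · rintro _ ⟨u, rfl⟩
    exact ⟨h u, (DistribMulAction.toAddEquiv M u).addOrderOf_eq P⟩

variable {R : Type*} [CommRing R] {N : ℕ}

theorem natCast_quotient_span_natCast_eq_zero : (N : R ⧸ Ideal.span {(N : R)}) = 0 := by
  rw [← map_natCast (Ideal.Quotient.mk _)]
  exact Ideal.Quotient.eq_zero_iff_mem.2 (Ideal.mem_span_singleton_self _)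

theorem cartanH_iff (hN : N ≠ 0) :
    CartanH R N ↔ ∃ P : R ⧸ Ideal.span {(N : R)}, addOrderOf P = N ∧
      ∀ r : R, IsUnit (Ideal.Quotient.mk (Ideal.span {(N : R)}) r) → r ∈ scalarSubalgebra R P := by
  refine exists_congr fun P => and_congr_right fun hP => ?_
  rw [natCard_orbit_units_eq_totient_iff hN natCast_quotient_span_natCast_eq_zero hP]
  refine ⟨fun h r hr => h hr.unit, fun h u => ?_⟩
  obtain ⟨r, hr⟩ := Ideal.Quotient.mk_surjective (u : R ⧸ Ideal.span {(N : R)})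
  have := h r (hr ▸ u.isUnit)
  rw [Units.smul_def, ← hr]
  exact this

end Orbit

section PolynomialValues

theorem isUnit_intCast_of_isCoprime {S : Type*} [CommRing S] {N : ℕ} (hS : (N : S) = 0) {z : ℤ}
    (hz : IsCoprime z N) : IsUnit (z : S) := by
  simpa [hS, isCoprime_zero_right] using hz.intCast (R := S)

theorem aeval_intCast_eq_intCast_eval {S : Type*} [Ring S] (f : ℤ[X]) (a : ℤ) :
    aeval (a : S) f = (f.eval a : ℤ) := by
  rw [← eq_intCast (algebraMap ℤ S) a, aeval_algebraMap_apply, coe_aeval_eq_eval, eq_intCast]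

variable {f : ℤ[X]}

theorem exists_isCoprime_eval {N : ℕ} (hN : N ≠ 0)
    (hf : ∀ p, p.Prime → p ∣ N → ∃ a : ℤ, ¬ (p : ℤ) ∣ f.eval a) :
    ∃ a : ℤ, IsCoprime (f.eval a) N := by
  choose a ha using fun p : N.primeFactors =>
    hf p (Nat.prime_of_mem_primeFactors p.2) (Nat.dvd_of_mem_primeFactors p.2)
  have pairwise_coprime : Pairwise (Function.onFun IsCoprime
      fun p : N.primeFactors => Ideal.span {((p : ℕ) : ℤ)}) := fun p q hpq =>
    (Ideal.isCoprime_span_singleton_iff _ _).2 <| Nat.isCoprime_iff_coprime.2 <|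
      (Nat.coprime_primes (Nat.prime_of_mem_primeFactors p.2)
        (Nat.prime_of_mem_primeFactors q.2)).2 (Subtype.coe_injective.ne hpq)
  obtain ⟨c, hc⟩ := Ideal.exists_forall_sub_mem_ideal pairwise_coprime a
  refine ⟨c, Int.isCoprime_iff_gcd_eq_one.2 (Nat.coprime_of_dvd fun p hp hpc hpN => ?_)⟩
  let p' : N.primeFactors := ⟨p, Nat.mem_primeFactors.2 ⟨hp, by simpa using hpN, hN⟩⟩
  have dvd_eval_sub : (p : ℤ) ∣ f.eval c - f.eval (a p') :=
    (Ideal.mem_span_singleton.1 (hc p')).trans (sub_dvd_eval_sub _ _ f)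
  exact ha p' ((dvd_sub_right (Int.natCast_dvd.2 hpc)).1 dvd_eval_sub)

theorem exists_not_prime_dvd_eval (hf : f.Monic) {p : ℕ} (hp : p.Prime) (hfp : f.natDegree < p) :
    ∃ a : ℤ, ¬ (p : ℤ) ∣ f.eval a := by
  have : Fact p.Prime := ⟨hp⟩
  obtain ⟨a, ha⟩ := (f.map (Int.castRingHom (ZMod p))).exists_eval_ne_zero_of_natDegree_lt_card
    (hf.map _).ne_zero (by simpa [hf.natDegree_map] using hfp)
  obtain ⟨a, rfl⟩ := ZMod.intCast_surjective a
  refine ⟨a, fun h => ha ?_⟩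
  rwa [eval_intCast_map, eq_intCast, ZMod.intCast_zmod_eq_zero_iff_dvd]

theorem not_prime_dvd_eval_one_scaleRoots (hf : f.Monic) {p : ℕ} (hp : p.Prime) :
    ¬ (p : ℤ) ∣ (f.scaleRoots p).eval 1 := by
  have : Fact p.Prime := ⟨hp⟩
  rw [← ZMod.intCast_zmod_eq_zero_iff_dvd, ← eq_intCast (Int.castRingHom (ZMod p)),
    ← eval_one_map, map_scaleRoots _ _ _ (by simp [hf.leadingCoeff])]
  simp [(hf.map (Int.castRingHom (ZMod p))).leadingCoeff]

theorem exists_aeval_zmod_prime_pow_eq_zero {p : ℕ} (hp : p.Prime) {a : ℤ}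
    (ha : (p : ℤ) ∣ f.eval a) (ha' : ¬ (p : ℤ) ∣ (derivative f).eval a) (k : ℕ) :
    ∃ c : ZMod (p ^ k), aeval c f = 0 := by
  have nilpotent_eval : IsNilpotent (aeval (a : ZMod (p ^ k)) f) := by
    refine ⟨k, ?_⟩
    rw [aeval_intCast_eq_intCast_eval, ← Int.cast_pow, ZMod.intCast_zmod_eq_zero_iff_dvd,
      Nat.cast_pow]
    exact pow_dvd_pow_of_dvd ha k
  have isUnit_derivative : IsUnit (aeval (a : ZMod (p ^ k)) (derivative f)) := by
    have isCoprime_derivative : IsCoprime ((derivative f).eval a) ((p ^ k : ℕ) : ℤ) := by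
      rw [Nat.cast_pow]
      exact (((Nat.prime_iff_prime_int.1 hp).coprime_iff_not_dvd.2 ha').pow_left).symm
    rw [aeval_intCast_eq_intCast_eval]
    exact isUnit_intCast_of_isCoprime (ZMod.natCast_self _) isCoprime_derivative
  exact (existsUnique_nilpotent_sub_and_aeval_eq_zero nilpotent_eval isUnit_derivative).exists.imp
    fun c hc => hc.2

theorem not_two_dvd_eval_zero_derivative (hf : f.Monic) (hdeg : f.natDegree = 2)
    (hroot : ∀ a : ℤ, 2 ∣ f.eval a) : ¬ 2 ∣ (derivative f).eval 0 := by
  have eval_zero : f.eval 0 = f.coeff 0 := (coeff_zero_eq_eval_zero f).symm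
  have eval_one : f.eval 1 = f.coeff 0 + f.coeff 1 + 1 := by
    rw [eval_eq_sum_range, hdeg, Finset.sum_range_succ, Finset.sum_range_succ, ← hdeg,
      hf.coeff_natDegree]
    simp
  have derivative_eval_zero : (derivative f).eval 0 = f.coeff 1 := by
    simp [← coeff_zero_eq_eval_zero, coeff_derivative]
  have := hroot 0
  have := hroot 1
  lia

theorem isUnit_intCast_sub_of_aeval_eq_zero {S : Type*} [CommRing S] {x : S}
    (hx : aeval x f = 0) {a : ℤ} {N : ℕ} (hS : (N : S) = 0) (ha : IsCoprime (f.eval a) N) :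
    IsUnit ((a : S) - x) := by
  have sub_dvd : (a : S) - x ∣ ((f.eval a : ℤ) : S) := by
    have := sub_dvd_eval_sub (a : S) x (f.map (Int.castRingHom S))
    rwa [eval_map, eval_map, ← algebraMap_int_eq, ← aeval_def, ← aeval_def, hx, sub_zero,
      aeval_intCast_eq_intCast_eval] at this
  exact isUnit_of_dvd_unit sub_dvd (isUnit_intCast_of_isCoprime hS ha)

end PolynomialValues

section LinearCofactor

variable {A S : Type*} [CommRing A] [CommRing S] [Algebra A S]

theorem sub_algebraMap_mul_aeval_divByMonic (f : A[X]) (x : S) (c : A) :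
    (x - algebraMap A S c) * aeval x (f /ₘ (X - C c)) = aeval x f - algebraMap A S (f.eval c) := by
  conv_rhs => rw [← modByMonic_add_div f (X - C c), modByMonic_X_sub_C_eq_C_eval]
  simp

theorem powerBasis_repr_aeval_of_natDegree_lt (pb : PowerBasis A S) {g : A[X]}
    (hg : g.natDegree < pb.dim) (i : Fin pb.dim) :
    pb.basis.repr (aeval pb.gen g) i = g.coeff i := by
  have aeval_eq : aeval pb.gen g = ∑ j : Fin pb.dim, g.coeff j • pb.basis j := by
    simp only [aeval_eq_sum_range' hg, pb.basis_eq_pow, Finset.sum_range]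
  rw [aeval_eq, pb.basis.repr_sum_self]

theorem exists_dual_apply_aeval_divByMonic_eq_one [Nontrivial S] (pb : PowerBasis A S) (c : A) :
    ∃ l : Module.Dual A S, l (aeval pb.gen (minpoly A pb.gen /ₘ (X - C c))) = 1 := by
  have : Nontrivial A := (algebraMap A S).domain_nontrivial
  set g := minpoly A pb.gen /ₘ (X - C c)
  have natDegree_eq : g.natDegree = pb.dim - 1 := by
    rw [natDegree_divByMonic _ (monic_X_sub_C c), pb.natDegree_minpoly, natDegree_X_sub_C]
  have natDegree_lt : g.natDegree < pb.dim := natDegree_eq ▸ Nat.sub_lt pb.dim_pos one_pos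
  have degree_le : (X - C c).degree ≤ (minpoly A pb.gen).degree := by
    rw [degree_X_sub_C, pb.degree_minpoly]
    exact_mod_cast pb.dim_pos
  refine ⟨pb.basis.coord ⟨g.natDegree, natDegree_lt⟩, ?_⟩
  rw [Module.Basis.coord_apply, powerBasis_repr_aeval_of_natDegree_lt pb natDegree_lt,
    coeff_natDegree, leadingCoeff_divByMonic_of_monic (monic_X_sub_C c) degree_le,
    (minpoly.monic pb.isIntegral_gen).leadingCoeff]

end LinearCofactor

section MonogenicQuotient

variable {R : Type*} [CommRing R] {N : ℕ}

theorem addOrderOf_quotient_mk_of_dual_apply_eq_one (l : Module.Dual ℤ R) {x : R} (hx : l x = 1) :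
    addOrderOf (Ideal.Quotient.mk (Ideal.span {(N : R)}) x) = N := by
  refine Nat.dvd_right_iff_eq.1 fun k => ?_
  rw [addOrderOf_dvd_iff_nsmul_eq_zero, ← map_nsmul, Ideal.Quotient.eq_zero_iff_mem,
    Ideal.mem_span_singleton]
  refine ⟨fun ⟨y, hy⟩ => ?_, fun h => ?_⟩
  · have := congrArg l hy
    rw [← nsmul_eq_mul, map_nsmul, map_nsmul, hx, nsmul_one, nsmul_eq_mul] at this
    exact Int.natCast_dvd_natCast.1 ⟨l y, this⟩
  · rw [nsmul_eq_mul]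
    exact (Nat.cast_dvd_cast h).mul_right x

theorem scalarSubalgebra_eq_top_of_gen_mem {M : Type*} [AddCommGroup M] [Module R M] {P : M}
    (pb : PowerBasis ℤ R) (h : pb.gen ∈ scalarSubalgebra R P) : scalarSubalgebra R P = ⊤ :=
  eq_top_iff.2 (pb.adjoin_gen_eq_top ▸ Algebra.adjoin_singleton_le h)

theorem exists_addOrderOf_eq_scalarSubalgebra_eq_top (pb : PowerBasis ℤ R) (φ : R →+* ZMod N) :
    ∃ P : R ⧸ Ideal.span {(N : R)}, addOrderOf P = N ∧ scalarSubalgebra R P = ⊤ := by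
  rcases subsingleton_or_nontrivial R with _ | _
  · have : Subsingleton (ZMod N) := φ.codomain_trivial
    obtain rfl : N = 1 := ZMod.subsingleton_iff.1 this
    exact ⟨0, addOrderOf_zero, Subsingleton.elim _ _⟩
  obtain ⟨c, hc⟩ := ZMod.intCast_surjective (φ pb.gen)
  obtain ⟨l, hl⟩ := exists_dual_apply_aeval_divByMonic_eq_one pb c
  set f := minpoly ℤ pb.gen
  have dvd_eval : (N : ℤ) ∣ f.eval c := by
    rw [← ZMod.intCast_zmod_eq_zero_iff_dvd, ← aeval_intCast_eq_intCast_eval, hc]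
    exact (aeval_algHom_apply φ.toIntAlgHom pb.gen f).trans (by simp [f, minpoly.aeval])
  refine ⟨Ideal.Quotient.mk _ (aeval pb.gen (f /ₘ (X - C c))),
    addOrderOf_quotient_mk_of_dual_apply_eq_one l hl,
    scalarSubalgebra_eq_top_of_gen_mem pb ⟨c, ?_⟩⟩
  have gen_sub_mul := sub_algebraMap_mul_aeval_divByMonic f pb.gen c
  rw [minpoly.aeval, zero_sub, eq_intCast (algebraMap ℤ R),
    eq_intCast (algebraMap ℤ R), sub_mul] at gen_sub_mul
  change c • Ideal.Quotient.mk _ _ = Ideal.Quotient.mk _ (pb.gen * _)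
  rw [eq_comm, ← map_zsmul, zsmul_eq_mul, Ideal.Quotient.eq, gen_sub_mul, neg_mem_iff,
    Ideal.mem_span_singleton]
  simpa using map_dvd (Int.castRingHom R) dvd_eval

theorem mem_scalarSubalgebra_of_isCoprime_eval {P : R ⧸ Ideal.span {(N : R)}}
    (hP : ∀ r : R, IsUnit (Ideal.Quotient.mk (Ideal.span {(N : R)}) r) → r ∈ scalarSubalgebra R P)
    {f : ℤ[X]} {x : R} (hx : aeval x f = 0) {a : ℤ} (ha : IsCoprime (f.eval a) N) :
    x ∈ scalarSubalgebra R P := by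
  have aeval_mk : aeval (Ideal.Quotient.mk (Ideal.span {(N : R)}) x) f = 0 := by
    have := aeval_algHom_apply (Ideal.Quotient.mkₐ ℤ (Ideal.span {(N : R)})) x f
    rwa [hx, map_zero] at this
  have isUnit_sub : IsUnit (Ideal.Quotient.mk (Ideal.span {(N : R)}) (a - x)) := by
    rw [map_sub, map_intCast]
    exact isUnit_intCast_sub_of_aeval_eq_zero aeval_mk natCast_quotient_span_natCast_eq_zero ha
  simpa using sub_mem (intCast_mem (scalarSubalgebra R P) a) (hP _ isUnit_sub)

theorem nonempty_ringHom_zmod_two_pow (pb : PowerBasis ℤ R) (hdim : pb.dim = 2)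
    (h : ∀ a : ℤ, 2 ∣ (minpoly ℤ pb.gen).eval a) (k : ℕ) : Nonempty (R →+* ZMod (2 ^ k)) := by
  obtain ⟨c, hc⟩ := exists_aeval_zmod_prime_pow_eq_zero Nat.prime_two (h 0)
    (not_two_dvd_eval_zero_derivative (minpoly.monic pb.isIntegral_gen)
      (pb.natDegree_minpoly.trans hdim) h) k
  exact ⟨(pb.lift c hc).toRingHom⟩

theorem two_mul_gen_mem_scalarSubalgebra (hN : N ≠ 0) (pb : PowerBasis ℤ R) (hdim : pb.dim = 2)
    {P : R ⧸ Ideal.span {(N : R)}}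
    (hP : ∀ r : R, IsUnit (Ideal.Quotient.mk (Ideal.span {(N : R)}) r) → r ∈ scalarSubalgebra R P) :
    2 * pb.gen ∈ scalarSubalgebra R P := by
  have monic_scaleRoots : ((minpoly ℤ pb.gen).scaleRoots 2).Monic :=
    (monic_scaleRoots_iff _).2 (minpoly.monic pb.isIntegral_gen)
  obtain ⟨a, ha⟩ := exists_isCoprime_eval (f := (minpoly ℤ pb.gen).scaleRoots 2) hN fun p hp _ => by
    rcases hp.two_le.eq_or_lt with rfl | hp_gt
    · exact ⟨1, not_prime_dvd_eval_one_scaleRoots (minpoly.monic pb.isIntegral_gen) hp⟩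
    · refine exists_not_prime_dvd_eval monic_scaleRoots hp ?_
      rwa [natDegree_scaleRoots, pb.natDegree_minpoly, hdim]
  refine mem_scalarSubalgebra_of_isCoprime_eval hP ?_ ha
  simpa using scaleRoots_aeval_eq_zero (r := (2 : ℤ)) (minpoly.aeval ℤ pb.gen)

theorem nonempty_ringHom_of_forall_two_dvd_eval (hN : N ≠ 0) (pb : PowerBasis ℤ R)
    (hdim : pb.dim = 2) (heven : ∀ a : ℤ, 2 ∣ (minpoly ℤ pb.gen).eval a)
    {P : R ⧸ Ideal.span {(N : R)}} (hPN : addOrderOf P = N)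
    (hP : ∀ r : R, IsUnit (Ideal.Quotient.mk (Ideal.span {(N : R)}) r) → r ∈ scalarSubalgebra R P) :
    Nonempty (R →+* ZMod N) := by
  obtain ⟨k, m, hm, hNkm⟩ := Nat.exists_eq_two_pow_mul_odd hN
  have addOrderOf_nsmul : addOrderOf (2 ^ k • P) = m := by
    rw [addOrderOf_nsmul_of_dvd (by positivity) ⟨m, hPN.trans hNkm⟩, hPN, hNkm,
      Nat.mul_div_cancel_left _ (by positivity)]
  have gen_mem : pb.gen ∈ scalarSubalgebra R (2 ^ k • P) :=
    mem_scalarSubalgebra_of_mul_mem (q := 2)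
      (addOrderOf_nsmul.symm ▸ Nat.coprime_two_left.2 hm)
      (scalarSubalgebra_le_nsmul _ (two_mul_gen_mem_scalarSubalgebra hN pb hdim hP))
  obtain ⟨φ⟩ := nonempty_ringHom_of_scalarSubalgebra_eq_top
    (scalarSubalgebra_eq_top_of_gen_mem pb gen_mem)
  obtain ⟨ψ⟩ := nonempty_ringHom_zmod_two_pow pb hdim heven k
  rw [addOrderOf_nsmul] at φ
  rw [hNkm]
  exact ⟨(ZMod.chineseRemainder (hm.coprime_two_left.pow_left k)).symm.toRingHom.comp (ψ.prod φ)⟩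

end MonogenicQuotient

section CyclicQuotient

variable {R : Type*} [CommRing R] {N : ℕ}

theorem exists_ideal_quotient_addEquiv_zmod_iff :
    (∃ I : Ideal R, Nonempty ((R ⧸ I) ≃+ ZMod N)) ↔ Nonempty (R →+* ZMod N) := by
  refine ⟨fun ⟨I, ⟨e⟩⟩ => nonempty_ringHom_of_addEquiv e, fun ⟨φ⟩ => ⟨RingHom.ker φ, ?_⟩⟩
  exact ⟨(RingHom.quotientKerEquivOfSurjective (ZMod.ringHom_surjective φ)).toAddEquiv⟩

theorem exists_submodule_addEquiv_zmod_iff (pb : PowerBasis ℤ R) :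
    (∃ M : Submodule R (R ⧸ Ideal.span {(N : R)}), Nonempty (M ≃+ ZMod N)) ↔
      Nonempty (R →+* ZMod N) := by
  refine ⟨fun ⟨M, ⟨e⟩⟩ => nonempty_ringHom_of_addEquiv e, fun ⟨φ⟩ => ?_⟩
  obtain ⟨P, hPN, hP⟩ := exists_addOrderOf_eq_scalarSubalgebra_eq_top pb φ
  have := nonempty_span_addEquiv_zmod hP
  rw [hPN] at this
  exact ⟨_, this⟩

theorem cartanH_iff_nonempty_ringHom (hN : N ≠ 0) (pb : PowerBasis ℤ R) (hdim : pb.dim = 2) :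
    CartanH R N ↔ Nonempty (R →+* ZMod N) := by
  rw [cartanH_iff hN]
  refine ⟨fun ⟨P, hPN, hP⟩ => ?_, fun ⟨φ⟩ => ?_⟩
  · by_cases heven : ∀ a : ℤ, 2 ∣ (minpoly ℤ pb.gen).eval a
    · exact nonempty_ringHom_of_forall_two_dvd_eval hN pb hdim heven hPN hP
    · obtain ⟨a, ha⟩ := exists_isCoprime_eval (f := minpoly ℤ pb.gen) hN fun p hp _ => by
        rcases hp.two_le.eq_or_lt with rfl | hp_gt
        · exact not_forall.1 heven
        · exact exists_not_prime_dvd_eval (minpoly.monic pb.isIntegral_gen) hp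
            (by rwa [pb.natDegree_minpoly, hdim])
      exact hPN ▸ nonempty_ringHom_of_scalarSubalgebra_eq_top (scalarSubalgebra_eq_top_of_gen_mem pb
        (mem_scalarSubalgebra_of_isCoprime_eval hP (minpoly.aeval ℤ pb.gen) ha))
  · obtain ⟨P, hPN, hP⟩ := exists_addOrderOf_eq_scalarSubalgebra_eq_top pb φ
    exact ⟨P, hPN, fun r _ => hP ▸ Algebra.mem_top⟩

theorem cyclic_quotient_tfae_general [Algebra.IsQuadraticExtension ℤ R] (hN : 0 < N) :
    ((∃ I : Ideal R, Nonempty ((R ⧸ I) ≃+ ZMod N)) ↔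
      (∃ M : Submodule R (R ⧸ Ideal.span {(N : R)}), Nonempty (M ≃+ ZMod N))) ∧
    ((∃ M : Submodule R (R ⧸ Ideal.span {(N : R)}), Nonempty (M ≃+ ZMod N)) ↔ CartanH R N) := by
  obtain ⟨pb, hdim⟩ := exists_powerBasis_dim_eq_two ℤ R
  rw [exists_ideal_quotient_addEquiv_zmod_iff, exists_submodule_addEquiv_zmod_iff pb,
    cartanH_iff_nonempty_ringHom hN.ne' pb hdim]
  exact ⟨Iff.rfl, Iff.rfl⟩

end CyclicQuotient

/-- For an order `O` in an imaginary quadratic field and `N ≥ 1` TFAE: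
(i) some quotient `O/I` has additive group `ℤ/N`; (ii) some `O`-submodule of `O/NO` has
additive group `ℤ/N`; (iii) `H(O,N)` holds. -/
theorem cyclic_quotient_tfae (K : Type*) [Field K] [NumberField K]
    (hK : IsImagQuadratic K) (f : ℕ) (hf : 0 < f)
    (O : Subalgebra ℤ K) (hO : IsOrderOfConductor K f O) (N : ℕ) (hN : 0 < N) :
    ((∃ I : Ideal ↥O, Nonempty ((↥O ⧸ I) ≃+ ZMod N)) ↔
      (∃ M : Submodule ↥O (↥O ⧸ Ideal.span {(N : ↥O)}), Nonempty (↥M ≃+ ZMod N))) ∧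
    ((∃ M : Submodule ↥O (↥O ⧸ Ideal.span {(N : ↥O)}), Nonempty (↥M ≃+ ZMod N)) ↔
      CartanH (↥O) N) := by
  have := hO.isQuadraticExtension hf hK.1
  exact cyclic_quotient_tfae_general hN
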